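/- Let D > 0 and U have canonical parameters (π/4, π/4, π/4) (the swap gate) and let the coupling have canonical parameters D·(2,1,−1). Then the minimal T ≥ 0 such that (π/4,π/4,π/4) ≺_s DT·(2,1,−1) or the s-ordered version of (π/4−π/2, π/4, π/4) is ≺_s DT·(2,1,−1) equals 3π/(16D). -/

import Mathlib

open scoped BigOperators

/-- The decreasing rearrangement of a vector in `ℝ^k`. -/
noncomputable def descSort {k : ℕ} (x : Fin k → ℝ) : Fin k → ℝ :=
  fun i => (x ∘ Tuple.sort x) i.rev

/-- Sum of the `m` largest entries of `x`, i.e. partial sum of the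
decreasing rearrangement. -/
noncomputable def partSum {k : ℕ} (x : Fin k → ℝ) (m : ℕ) : ℝ :=
  ∑ i : Fin k, if (i : ℕ) < m then descSort x i else 0

/-- `Majorized x y` means `x ≺ y`. -/
noncomputable def Majorized {k : ℕ} (x y : Fin k → ℝ) : Prop :=
  (∀ m : ℕ, m < k → partSum x m ≤ partSum y m) ∧ (∑ i, x i = ∑ i, y i)

/-- The s-ordered version of a vector in `ℝ³`. -/
noncomputable def sOrder (v : Fin 3 → ℝ) : Fin 3 → ℝ :=
  ![descSort (fun i => |v i|) 0, descSort (fun i => |v i|) 1,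
    Real.sign (v 0 * v 1 * v 2) * descSort (fun i => |v i|) 2]

/-- `SMajorized x y` means `x ≺ₛ y` (s-majorization on `ℝ³`). -/
noncomputable def SMajorized (x y : Fin 3 → ℝ) : Prop :=
  sOrder x 0 ≤ sOrder y 0 ∧
  sOrder x 0 + sOrder x 1 + sOrder x 2 ≤ sOrder y 0 + sOrder y 1 + sOrder y 2 ∧
  sOrder x 0 + sOrder x 1 - sOrder x 2 ≤ sOrder y 0 + sOrder y 1 - sOrder y 2

/-!
If `y₁ ≥ y₂ ≥ |y₃|`, then `y₁` is at least the mean of `y₁, y₂, ±y₃`. Hence the s-majorization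
of `(a, a, a)`, respectively `(a, a, -a)`, by `y` reduces to the single inequality
`3a ≤ y₁ + y₂ + y₃`, respectively `3a ≤ y₁ + y₂ - y₃`. Since `(π/4 - π/2, π/4, π/4)` is a
permutation of `(π/4, π/4, -π/4)`, one of the two targets can be reached exactly when
`3π/4 ≤ y₁ + y₂ + |y₃|`, and for `y = DT·(2, 1, -1)` the right-hand side is `4DT`.
-/

/-- The s-ordered vectors, `v₁ ≥ v₂ ≥ |v₃|`, which are those that `sOrder` leaves unchanged. -/
def SOrdered (v : Fin 3 → ℝ) : Prop :=
  v 1 ≤ v 0 ∧ |v 2| ≤ v 1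

theorem descSort_of_antitone {k : ℕ} {x : Fin k → ℝ} (hx : Antitone x) : descSort x = x := by
  have hsort : x ∘ Tuple.sort x = x ∘ Fin.revPerm :=
    Tuple.unique_monotone (Tuple.monotone_sort x) fun _ _ hij => hx (Fin.rev_le_rev.mpr hij)
  funext i
  simpa [descSort] using congrFun hsort i.rev

theorem descSort_comp_perm {k : ℕ} (x : Fin k → ℝ) (σ : Equiv.Perm (Fin k)) :
    descSort (x ∘ σ) = descSort x :=
  funext fun i => congrFun Tuple.comp_perm_comp_sort_eq_comp_sort i.rev

theorem sOrder_comp_perm (v : Fin 3 → ℝ) (σ : Equiv.Perm (Fin 3)) :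
    sOrder (v ∘ σ) = sOrder v := by
  have habs : descSort (fun i => |(v ∘ σ) i|) = descSort (fun i => |v i|) :=
    descSort_comp_perm (fun i => |v i|) σ
  have hprod : (v ∘ σ) 0 * (v ∘ σ) 1 * (v ∘ σ) 2 = v 0 * v 1 * v 2 := by
    simpa only [Fin.prod_univ_three, Function.comp_apply] using Equiv.prod_comp σ v
  simp only [sOrder, habs, hprod]

theorem sign_mul_mul_abs_of_pos {a b : ℝ} (ha : 0 < a) : Real.sign (a * b) * |b| = b := by
  rcases lt_trichotomy b 0 with hb | rfl | hb
  · rw [Real.sign_of_neg (mul_neg_of_pos_of_neg ha hb), abs_of_neg hb, neg_one_mul, neg_neg]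
  · simp
  · rw [Real.sign_of_pos (mul_pos ha hb), abs_of_pos hb, one_mul]

namespace SOrdered

variable {v : Fin 3 → ℝ}

theorem antitone_abs (hv : SOrdered v) : Antitone fun i => |v i| := by
  obtain ⟨h₁₀, h₂₁⟩ := hv
  have h₁ : 0 ≤ v 1 := (abs_nonneg _).trans h₂₁
  refine Fin.antitone_iff_succ_le.mpr fun i => ?_
  fin_cases i
  · exact abs_le_abs_of_nonneg h₁ h₁₀
  · exact h₂₁.trans (le_abs_self _)

theorem sign_mul_abs (hv : SOrdered v) : Real.sign (v 0 * v 1 * v 2) * |v 2| = v 2 := by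
  obtain ⟨h₁₀, h₂₁⟩ := hv
  rcases ((abs_nonneg _).trans h₂₁).eq_or_lt with h₁ | h₁
  · have h₂ : v 2 = 0 := abs_nonpos_iff.mp (h₂₁.trans_eq h₁.symm)
    simp [h₂]
  · exact sign_mul_mul_abs_of_pos (mul_pos (h₁.trans_le h₁₀) h₁)

theorem sOrder_eq (hv : SOrdered v) : sOrder v = v := by
  have h₁ : 0 ≤ v 1 := (abs_nonneg _).trans hv.2
  have h₀ : 0 ≤ v 0 := h₁.trans hv.1
  simp only [sOrder, descSort_of_antitone hv.antitone_abs, hv.sign_mul_abs, abs_of_nonneg h₀,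
    abs_of_nonneg h₁]
  ext i
  fin_cases i <;> rfl

theorem const_mul (hv : SOrdered v) {s : ℝ} (hs : 0 ≤ s) : SOrdered fun i => s * v i := by
  refine ⟨mul_le_mul_of_nonneg_left hv.1 hs, ?_⟩
  rw [abs_mul, abs_of_nonneg hs]
  exact mul_le_mul_of_nonneg_left hv.2 hs

end SOrdered

section Diagonal

variable {a : ℝ} {y : Fin 3 → ℝ}

theorem sMajorized_diagonal_iff (ha : 0 ≤ a) (hy : SOrdered y) :
    SMajorized ![a, a, a] y ↔ 3 * a ≤ y 0 + y 1 + y 2 := by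
  have hx : SOrdered ![a, a, a] := ⟨le_rfl, (abs_of_nonneg ha).le⟩
  have h₂₁ : y 2 ≤ y 1 := (le_abs_self _).trans hy.2
  simp only [SMajorized, hx.sOrder_eq, hy.sOrder_eq, Matrix.cons_val]
  constructor
  · rintro ⟨-, hsum, -⟩
    linarith
  · intro hsum
    have hfirst : a ≤ y 0 := by linarith [hy.1]
    exact ⟨hfirst, by linarith, by linarith⟩

theorem sOrder_neg_head_diagonal (ha : 0 ≤ a) : sOrder ![-a, a, a] = ![a, a, -a] := by
  have hx : SOrdered ![a, a, -a] := ⟨le_rfl, by simp [abs_of_nonneg ha]⟩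
  have hperm : ![-a, a, a] = ![a, a, -a] ∘ Equiv.swap 0 2 := by
    ext i
    fin_cases i <;> rfl
  rw [hperm, sOrder_comp_perm, hx.sOrder_eq]

theorem sMajorized_neg_head_diagonal_iff (ha : 0 ≤ a) (hy : SOrdered y) :
    SMajorized ![-a, a, a] y ↔ 3 * a ≤ y 0 + y 1 - y 2 := by
  have h₂₁ : -y 2 ≤ y 1 := (neg_le_abs _).trans hy.2
  simp only [SMajorized, sOrder_neg_head_diagonal ha, hy.sOrder_eq, Matrix.cons_val]
  constructor
  · rintro ⟨-, -, hdiff⟩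
    linarith
  · intro hdiff
    have hfirst : a ≤ y 0 := by linarith [hy.1]
    exact ⟨hfirst, by linarith, by linarith⟩

theorem sMajorized_diagonal_or_neg_head_diagonal_iff (ha : 0 ≤ a) (hy : SOrdered y) :
    SMajorized ![a, a, a] y ∨ SMajorized ![-a, a, a] y ↔ 3 * a ≤ y 0 + y 1 + |y 2| := by
  rw [sMajorized_diagonal_iff ha hy, sMajorized_neg_head_diagonal_iff ha hy, sub_eq_add_neg,
    ← sub_le_iff_le_add', ← sub_le_iff_le_add', ← sub_le_iff_le_add', le_abs]

theorem sMajorized_or_neg_head_mul_two_one_neg_one_iff {s : ℝ} (ha : 0 ≤ a) (hs : 0 ≤ s) :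
    SMajorized ![a, a, a] (fun i => s * (![2, 1, -1] i)) ∨
      SMajorized ![-a, a, a] (fun i => s * (![2, 1, -1] i)) ↔ 3 * a ≤ 4 * s := by
  have hcoupling : SOrdered ![2, 1, -1] := ⟨one_le_two, by simp⟩
  have hsum : s * 2 + s * 1 + |s * -1| = 4 * s := by
    rw [mul_neg_one, abs_neg, abs_of_nonneg hs]
    ring
  rw [sMajorized_diagonal_or_neg_head_diagonal_iff ha (hcoupling.const_mul hs)]
  simp only [Matrix.cons_val, hsum]

end Diagonal

open Real in
/-- The minimum time to generate the swap gate with coupling of canonical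
parameters `D·(2,1,−1)` is `3π/(16D)`. -/
theorem swap_gate_minimum_time (D : ℝ) (hD : 0 < D) :
    IsLeast {T : ℝ | 0 ≤ T ∧
      (SMajorized ![π / 4, π / 4, π / 4] (fun i => D * T * (![2, 1, -1] i)) ∨
       SMajorized ![π / 4 - π / 2, π / 4, π / 4]
         (fun i => D * T * (![2, 1, -1] i)))}
      (3 * π / (16 * D)) := by
  have hangle : 0 ≤ π / 4 := by positivity
  have hshift : π / 4 - π / 2 = -(π / 4) := by ring
  rw [hshift]
  refine ⟨⟨by positivity, ?_⟩, ?_⟩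
  · rw [sMajorized_or_neg_head_mul_two_one_neg_one_iff hangle (by positivity)]
    field_simp
    norm_num
  · rintro T ⟨hT, hreach⟩
    rw [sMajorized_or_neg_head_mul_two_one_neg_one_iff hangle (by positivity)] at hreach
    rw [div_le_iff₀ (by positivity)]
    linarith
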